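/- arXiv:2402.04514 — 2 statements merged into one kernel-verified Lean document; each statement's English description precedes it below -/
import Mathlib

section
/- Assume the partition-of-unity property Σ_{j ∈ ι} c i j + c∂ i = 0 for every i ∈ ι, that c i i = 0 for all i, that dv i j ≠ 0 for all j ≠ i, that d∂ i ≠ 0 for all i, and that u' satisfies the low-order scheme. Then for every i ∈ ι the update admits the convex reformulation u' i = (1 + 2*τ*(D i)/(m i)) • u i + (2*τ*(d∂ i)/(m i)) • ū∂ i + Σ_{j ≠ i} (2*τ*(dv i j)/(m i)) • ū i j, where the bar states are ū i j := (1/2) • (u j + u i) − (1/(2 * dv i j)) • ((f (u j) − f (u i))·(c i j)) and ū∂ i := (1/2) • (u∂ i + u i) − (1/(2 * d∂ i)) • ((f (u∂ i) − f (u i))·(c∂ i)), and the diagonal viscosity is D i := −(Σ_{j ≠ i} dv i j) − d∂ i. -/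
open Finset

/-- Contraction of a flux value `G : Fin M → Fin d → ℝ` with a vector
`c : Fin d → ℝ`, yielding a state in `Fin M → ℝ`. -/
noncomputable def contr {M d : ℕ} (G : Fin M → Fin d → ℝ) (c : Fin d → ℝ) :
    Fin M → ℝ :=
  fun k => ∑ α, G k α * c α

/-!
Let `w` be the state at a node. Multiplying the bar state `ū` of an edge, with viscosity `ν`,
vector `c` and neighbouring state `v`, by `2 ν` clears its denominators, which gives
`f v · c - ν (v - w) = f w · c + 2 ν w - 2 ν ū`. Summed over all edges, the boundary included, the
terms `f w · c` cancel by the partition of unity, and only `w` and the bar states remain.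
-/

/-- The contraction `contr` bundled as a bilinear map, through matrix-vector multiplication. -/
def contrBilin {M d : ℕ} : (Fin M → Fin d → ℝ) →ₗ[ℝ] (Fin d → ℝ) →ₗ[ℝ] (Fin M → ℝ) :=
  Matrix.mulVecBilin ℝ ℝ ∘ₗ (Matrix.ofLinearEquiv ℝ).toLinearMap

theorem contrBilin_apply {M d : ℕ} (G : Fin M → Fin d → ℝ) (c : Fin d → ℝ) :
    contrBilin G c = contr G c :=
  rfl

section ConvexReformulation

variable {K E G V : Type*} [Field K] [AddCommGroup E] [Module K E]
  [AddCommGroup G] [Module K G] [AddCommGroup V] [Module K V]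

/-- The bar state of an edge from a node with state `w` to a neighbour with state `v`: the
intermediate state of the edge with graph viscosity `ν` and edge vector `c`. The contraction of
flux values with vectors is an arbitrary bilinear map `B`. -/
def barState (B : G →ₗ[K] V →ₗ[K] E) (f : E → G) (ν : K) (c : V) (w v : E) : E :=
  (1 / 2 : K) • (v + w) - (1 / (2 * ν)) • B (f v - f w) c

theorem eq_sub_div_smul_of_smul_sub_add_smul_eq_zero {m τ : K} (hm : m ≠ 0) {w' w r : E}
    (h : m • (w' - w) + τ • r = 0) : w' = w - (τ / m) • r := by
  have hincr : w' - w = -(τ / m) • r := by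
    rw [← inv_smul_smul₀ hm (w' - w), eq_neg_of_add_eq_zero_left h]
    module
  rw [← sub_add_cancel w' w, hincr]
  module

variable [NeZero (2 : K)] (B : G →ₗ[K] V →ₗ[K] E) (f : E → G)

theorem two_mul_smul_barState {ν : K} (hν : ν ≠ 0) (c : V) (w v : E) :
    (2 * ν) • barState B f ν c w v = ν • (v + w) - B (f v - f w) c := by
  have hmean : 2 * ν * (1 / 2) = ν := by field_simp
  have hflux : 2 * ν * (1 / (2 * ν)) = 1 := mul_one_div_cancel (mul_ne_zero two_ne_zero hν)
  rw [barState, smul_sub, smul_smul, smul_smul, hmean, hflux, one_smul]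

theorem flux_sub_viscosity_eq_barState {ν : K} (hν : ν ≠ 0) (c : V) (w v : E) :
    B (f v) c - ν • (v - w) = B (f w) c + (2 * ν) • w - (2 * ν) • barState B f ν c w v := by
  rw [two_mul_smul_barState B f hν, map_sub, LinearMap.sub_apply]
  module

theorem sum_flux_sub_viscosity_eq_barState {ι : Type*} {s : Finset ι} {ν : ι → K}
    (hν : ∀ j ∈ s, ν j ≠ 0) (c : ι → V) (w : E) (v : ι → E) :
    ∑ j ∈ s, (B (f (v j)) (c j) - ν j • (v j - w)) =
      B (f w) (∑ j ∈ s, c j) + (2 * ∑ j ∈ s, ν j) • w -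
        ∑ j ∈ s, (2 * ν j) • barState B f (ν j) (c j) w (v j) := by
  rw [sum_congr rfl fun j hj => flux_sub_viscosity_eq_barState B f (hν j hj) (c j) w (v j)]
  simp only [sum_sub_distrib, sum_add_distrib, map_sum, mul_sum, sum_smul]

theorem lowOrder_residual_eq_barState {ι : Type*} [Fintype ι] [DecidableEq ι] (i : ι)
    {c : ι → V} {cB : V} {ν : ι → K} {νB : K} (u : ι → E) (uB : E)
    (hpart : ∑ j, c j + cB = 0) (hci : c i = 0) (hν : ∀ j, j ≠ i → ν j ≠ 0) (hνB : νB ≠ 0) :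
    ∑ j, (B (f (u j)) (c j) - ν j • (u j - u i)) + B (f uB) cB - νB • (uB - u i) =
      (2 * (∑ j ∈ univ.erase i, ν j + νB)) • u i -
        (2 * νB) • barState B f νB cB (u i) uB -
        ∑ j ∈ univ.erase i, (2 * ν j) • barState B f (ν j) (c j) (u i) (u j) := by
  have hoff : ∑ j, (B (f (u j)) (c j) - ν j • (u j - u i)) =
      ∑ j ∈ univ.erase i, (B (f (u j)) (c j) - ν j • (u j - u i)) :=
    (sum_erase _ (by simp [hci])).symm
  have hcancel : B (f (u i)) (∑ j ∈ univ.erase i, c j) + B (f (u i)) cB = 0 := by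
    rw [← map_add, sum_erase _ hci, hpart, map_zero]
  rw [hoff, add_sub_assoc,
    sum_flux_sub_viscosity_eq_barState B f fun j hj => hν j (ne_of_mem_erase hj),
    flux_sub_viscosity_eq_barState B f hνB, eq_neg_of_add_eq_zero_left hcancel]
  module

theorem lowOrder_convex_reformulation_general {ι : Type*} [Fintype ι] [DecidableEq ι] (i : ι)
    {m : K} (hm : m ≠ 0) {τ : K} {c : ι → V} {cB : V} {ν : ι → K} {νB : K}
    {u : ι → E} {uB u' : E}
    (hpart : ∑ j, c j + cB = 0) (hci : c i = 0) (hν : ∀ j, j ≠ i → ν j ≠ 0) (hνB : νB ≠ 0)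
    (hscheme : m • (u' - u i) + τ • (∑ j, (B (f (u j)) (c j) - ν j • (u j - u i)) +
      B (f uB) cB - νB • (uB - u i)) = 0) :
    u' = (1 + 2 * τ * (-(∑ j ∈ univ.erase i, ν j) - νB) / m) • u i +
      (2 * τ * νB / m) • barState B f νB cB (u i) uB +
      ∑ j ∈ univ.erase i, (2 * τ * ν j / m) • barState B f (ν j) (c j) (u i) (u j) := by
  have hcoeff (j : ι) : 2 * τ * ν j / m = τ / m * (2 * ν j) := by ring
  rw [eq_sub_div_smul_of_smul_sub_add_smul_eq_zero hm hscheme,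
    lowOrder_residual_eq_barState B f i u uB hpart hci hν hνB]
  simp only [hcoeff, mul_smul (τ / m), ← smul_sum]
  module

end ConvexReformulation

/-- `cB`, `dB`, `uB` play the roles of the boundary data `c∂`, `d∂`, `u∂`;
`ubar` and `ubarB` are the bar states, and `D` the diagonal viscosity. -/
theorem lowOrder_convex_reformulation
    {d M : ℕ} (hd : 1 ≤ d) (hM : 1 ≤ M)
    {ι : Type*} [Fintype ι] [DecidableEq ι]
    (m : ι → ℝ) (hm : ∀ i, 0 < m i)
    (τ : ℝ) (hτ : 0 < τ)
    (c : ι → ι → (Fin d → ℝ)) (dv : ι → ι → ℝ)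
    (cB : ι → (Fin d → ℝ)) (dB : ι → ℝ)
    (f : (Fin M → ℝ) → (Fin M → Fin d → ℝ))
    (u : ι → (Fin M → ℝ)) (uB : ι → (Fin M → ℝ)) (u' : ι → (Fin M → ℝ))
    (hpart : ∀ i, ∑ j, c i j + cB i = 0)
    (hcii : ∀ i, c i i = 0)
    (hdv : ∀ i j, j ≠ i → dv i j ≠ 0)
    (hdB : ∀ i, dB i ≠ 0)
    (hscheme : ∀ i,
      m i • (u' i - u i) +
        τ • ((∑ j, (contr (f (u j)) (c i j) - dv i j • (u j - u i))) +
          contr (f (uB i)) (cB i) - dB i • (uB i - u i)) = 0)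
    (ubar : ι → ι → (Fin M → ℝ))
    (hubar : ∀ i j, ubar i j =
      (1 / 2 : ℝ) • (u j + u i) -
        (1 / (2 * dv i j)) • contr (f (u j) - f (u i)) (c i j))
    (ubarB : ι → (Fin M → ℝ))
    (hubarB : ∀ i, ubarB i =
      (1 / 2 : ℝ) • (uB i + u i) -
        (1 / (2 * dB i)) • contr (f (uB i) - f (u i)) (cB i))
    (D : ι → ℝ)
    (hD : ∀ i, D i = -(∑ j ∈ Finset.univ.erase i, dv i j) - dB i) :
    ∀ i, u' i =
      (1 + 2 * τ * D i / m i) • u i +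
      (2 * τ * dB i / m i) • ubarB i +
      ∑ j ∈ Finset.univ.erase i, (2 * τ * dv i j / m i) • ubar i j := by
  intro i
  simpa only [hD, hubar, hubarB, barState, contrBilin_apply] using
    lowOrder_convex_reformulation_general contrBilin f i (hm i).ne' (hpart i) (hcii i) (hdv i)
      (hdB i) (hscheme i)
end

section
/- Let γ > 1, let 0 < ρmin ≤ ρmax, and let smin > 0. Then the local-bounds set B := { (ρ, mv, E) ∈ ℝ × (EuclideanSpace ℝ (Fin d)) × ℝ : ρmin ≤ ρ ≤ ρmax and ρ^(−γ) * (E − ‖mv‖²/(2ρ)) ≥ smin } is a convex subset of ℝ × (EuclideanSpace ℝ (Fin d)) × ℝ. -/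
/-!
For positive density the entropy bound `s ≤ ρ ^ (-γ) * ε` says that the total energy lies above
`s * ρ ^ γ + ‖m‖ ^ 2 / (2 * ρ)`, so the local-bounds set is part of an epigraph. The first summand
is a convex function of `ρ`; the second is half the perspective `ρ * ‖ρ⁻¹ • m‖ ^ 2` of the convex
function `‖·‖ ^ 2`, hence convex in `(ρ, m)` jointly.
-/

section Perspective

variable {𝕜 E β : Type*} [Field 𝕜] [AddCommMonoid E] [Module 𝕜 E] [AddCommMonoid β] [Module 𝕜 β]

/-- The perspective `(r, x) ↦ r • f (x / r)` of a function `f`, turning convexity of `f` into joint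
convexity in `(r, x)`. It is meaningful only for `r ≠ 0`; the convention `0⁻¹ = 0` gives it the
value `0` at `r = 0`. -/
def perspective (f : E → β) (p : 𝕜 × E) : β :=
  p.1 • f (p.1⁻¹ • p.2)

theorem inv_smul_add_smul_eq {r t : 𝕜} (hr : r ≠ 0) (ht : t ≠ 0) (a b : 𝕜) (x y : E) :
    (a * r + b * t)⁻¹ • (a • x + b • y) =
      (a * r / (a * r + b * t)) • r⁻¹ • x + (b * t / (a * r + b * t)) • t⁻¹ • y := by
  simp only [smul_add, smul_smul]
  congr 2 <;> field_simp

variable [LinearOrder 𝕜] [IsStrictOrderedRing 𝕜]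

theorem convex_setOf_inv_smul_mem {s : Set E} (hs : Convex 𝕜 s) :
    Convex 𝕜 {p : 𝕜 × E | 0 < p.1 ∧ p.1⁻¹ • p.2 ∈ s} := by
  rintro ⟨r, x⟩ ⟨hr, hx⟩ ⟨t, y⟩ ⟨ht, hy⟩ a b ha hb hab
  have hpos : 0 < a * r + b * t := convex_Ioi 0 hr ht ha hb hab
  refine ⟨hpos, ?_⟩
  change (a * r + b * t)⁻¹ • (a • x + b • y) ∈ s
  rw [inv_smul_add_smul_eq hr.ne' ht.ne']
  refine hs hx hy (div_nonneg (mul_nonneg ha hr.le) hpos.le)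
    (div_nonneg (mul_nonneg hb ht.le) hpos.le) ?_
  rw [← add_div, div_self hpos.ne']

theorem convexOn_perspective [PartialOrder β] [PosSMulMono 𝕜 β] {s : Set E} {f : E → β}
    (hf : ConvexOn 𝕜 s f) :
    ConvexOn 𝕜 {p : 𝕜 × E | 0 < p.1 ∧ p.1⁻¹ • p.2 ∈ s} (perspective f) := by
  refine ⟨convex_setOf_inv_smul_mem hf.1, ?_⟩
  rintro ⟨r, x⟩ ⟨hr, hx⟩ ⟨t, y⟩ ⟨ht, hy⟩ a b ha hb hab
  have hpos : 0 < a * r + b * t := convex_Ioi 0 hr ht ha hb hab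
  have hjensen := (convexOn_iff_div.1 hf).2 hx hy (mul_nonneg ha hr.le) (mul_nonneg hb ht.le) hpos
  calc perspective f (a • (r, x) + b • (t, y))
      = (a * r + b * t) • f ((a * r / (a * r + b * t)) • r⁻¹ • x +
          (b * t / (a * r + b * t)) • t⁻¹ • y) := by
        rw [← inv_smul_add_smul_eq hr.ne' ht.ne']
        rfl
    _ ≤ (a * r + b * t) • ((a * r / (a * r + b * t)) • f (r⁻¹ • x) +
          (b * t / (a * r + b * t)) • f (t⁻¹ • y)) :=
        smul_le_smul_of_nonneg_left hjensen hpos.le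
    _ = a • perspective f (r, x) + b • perspective f (t, y) := by
        simp only [perspective, smul_add, smul_smul, mul_div_cancel₀ _ hpos.ne']

end Perspective

section LocalBounds

variable {V : Type*} [SeminormedAddCommGroup V] [NormedSpace ℝ V]

theorem convexOn_norm_sq_div :
    ConvexOn ℝ {p : ℝ × V | 0 < p.1} fun p => ‖p.2‖ ^ 2 / p.1 := by
  have hsq : ConvexOn ℝ Set.univ fun x : V => ‖x‖ ^ 2 :=
    convexOn_univ_norm.pow (fun x _ => norm_nonneg x) 2
  have hpersp := convexOn_perspective hsq
  simp only [Set.mem_univ, and_true] at hpersp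
  refine hpersp.congr fun p (hp : 0 < p.1) => ?_
  simp only [perspective, norm_smul, norm_inv, Real.norm_of_nonneg hp.le, smul_eq_mul]
  field_simp

theorem convexOn_mul_rpow_add_norm_sq_div {γ s : ℝ} (hγ : 1 ≤ γ) (hs : 0 ≤ s) :
    ConvexOn ℝ {p : ℝ × V | 0 < p.1} fun p => s * p.1 ^ γ + ‖p.2‖ ^ 2 / (2 * p.1) := by
  have hinternal : ConvexOn ℝ {p : ℝ × V | 0 < p.1} fun p => s * p.1 ^ γ :=
    (((convexOn_rpow hγ).smul hs).comp_linearMap (LinearMap.fst ℝ ℝ V)).subset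
      (fun p (hp : 0 < p.1) => hp.le) convexOn_norm_sq_div.1
  have hkinetic : ConvexOn ℝ {p : ℝ × V | 0 < p.1} fun p => ‖p.2‖ ^ 2 / (2 * p.1) := by
    refine (convexOn_norm_sq_div.smul (show (0 : ℝ) ≤ 1 / 2 by norm_num)).congr fun p _ => ?_
    simp only [smul_eq_mul, div_mul_div_comm, one_mul]
  exact hinternal.add hkinetic

theorem le_rpow_neg_mul_sub_iff {ρ : ℝ} (hρ : 0 < ρ) (γ s k E : ℝ) :
    s ≤ ρ ^ (-γ) * (E - k) ↔ s * ρ ^ γ + k ≤ E := by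
  rw [Real.rpow_neg hρ.le, inv_mul_eq_div, le_div_iff₀ (Real.rpow_pos_of_pos hρ γ),
    le_sub_iff_add_le]

theorem euler_local_bounds_set_convex_general {γ s : ℝ} (hγ : 1 ≤ γ) (hs : 0 ≤ s)
    {D : Set ℝ} (hD : Convex ℝ D) (hDpos : D ⊆ Set.Ioi 0) :
    Convex ℝ {p : ℝ × V × ℝ |
      p.1 ∈ D ∧ s ≤ p.1 ^ (-γ) * (p.2.2 - ‖p.2.1‖ ^ 2 / (2 * p.1))} := by
  have henergy : ConvexOn ℝ {p : ℝ × V | p.1 ∈ D}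
      fun p => s * p.1 ^ γ + ‖p.2‖ ^ 2 / (2 * p.1) :=
    (convexOn_mul_rpow_add_norm_sq_div hγ hs).subset (fun _ hp => hDpos hp)
      (hD.linear_preimage (LinearMap.fst ℝ ℝ V))
  have hepigraph := henergy.convex_epigraph.linear_preimage
    (LinearEquiv.prodAssoc ℝ ℝ V ℝ).symm.toLinearMap
  refine (congrArg (Convex ℝ) (Set.ext fun p => ?_)).mpr hepigraph
  exact and_congr_right fun hp => le_rpow_neg_mul_sub_iff (hDpos hp) _ _ _ _

end LocalBounds

/-- The local-bounds set (density bounds and a minimum principle on the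
rescaled specific entropy `ρ^(−γ) ε`) of the compressible Euler equations is
convex. States are triples `(ρ, mv, E) : ℝ × EuclideanSpace ℝ (Fin d) × ℝ`,
and `ρ ^ (−γ)` is the real power `Real.rpow`. -/
theorem euler_local_bounds_set_convex
    {d : ℕ} (hd : 1 ≤ d)
    (γ : ℝ) (hγ : 1 < γ)
    (ρmin ρmax : ℝ) (hρmin : 0 < ρmin) (hρ : ρmin ≤ ρmax)
    (smin : ℝ) (hsmin : 0 < smin) :
    Convex ℝ {p : ℝ × EuclideanSpace ℝ (Fin d) × ℝ |
      (ρmin ≤ p.1 ∧ p.1 ≤ ρmax) ∧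
        smin ≤ p.1 ^ (-γ) * (p.2.2 - ‖p.2.1‖ ^ 2 / (2 * p.1))} :=
  euler_local_bounds_set_convex_general hγ.le hsmin.le (convex_Icc ρmin ρmax)
    fun _ hr => hρmin.trans_le hr.1
end
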